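/- Let k ≥ 1, let I_k and Ĩ_k be two disjoint copies of {1,…,k}, and let P be an even partition of I_k ∪ Ĩ_k, i.e., every block B of P satisfies |B ∩ I_k| = |B ∩ Ĩ_k|. Then there exists a permutation σ̂ of {1,…,k} compatible with P such that deg(σ̂) ≥ s(π(P))/2. -/

import Mathlib

/-- The extension `σ̃` of a permutation `σ` of `{1,…,k}` to `{0,1,…,k+1}`, with
`σ̃(0) = 0` and `σ̃(k+1) = k+1`.  Here `σ : Equiv.Perm (Fin k)` acts on `{0,…,k-1}`,
shifted by one. -/
def sigmaTilde (k : ℕ) (σ : Equiv.Perm (Fin k)) (j : ℕ) : ℕ :=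
  if h : 1 ≤ j ∧ j ≤ k then ((σ ⟨j - 1, by omega⟩ : Fin k) : ℕ) + 1 else j

/-- The point `(j, σ(j))` is a *peak*: `σ(j) < min {σ̃(j-1), σ̃(j+1)}`. -/
def IsPeakAt (k : ℕ) (σ : Equiv.Perm (Fin k)) (j : ℕ) : Prop :=
  sigmaTilde k σ j < min (sigmaTilde k σ (j - 1)) (sigmaTilde k σ (j + 1))

/-- The point `(j, σ(j))` is a *valley*: `σ(j) > max {σ̃(j-1), σ̃(j+1)}`. -/
def IsValleyAt (k : ℕ) (σ : Equiv.Perm (Fin k)) (j : ℕ) : Prop :=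
  max (sigmaTilde k σ (j - 1)) (sigmaTilde k σ (j + 1)) < sigmaTilde k σ j

/-- The point `(j, σ(j))` is a *ladder*: `σ(j) - 1 ∈ {σ̃(j-1), σ̃(j+1)}` and the point is
not a valley. -/
def IsLadderAt (k : ℕ) (σ : Equiv.Perm (Fin k)) (j : ℕ) : Prop :=
  (sigmaTilde k σ j - 1 = sigmaTilde k σ (j - 1) ∨
    sigmaTilde k σ j - 1 = sigmaTilde k σ (j + 1)) ∧ ¬IsValleyAt k σ j

instance (k : ℕ) (σ : Equiv.Perm (Fin k)) (j : ℕ) : Decidable (IsPeakAt k σ j) := by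
  unfold IsPeakAt; infer_instance

instance (k : ℕ) (σ : Equiv.Perm (Fin k)) (j : ℕ) : Decidable (IsValleyAt k σ j) := by
  unfold IsValleyAt; infer_instance

instance (k : ℕ) (σ : Equiv.Perm (Fin k)) (j : ℕ) : Decidable (IsLadderAt k σ j) := by
  unfold IsLadderAt; infer_instance

/-- `ℓ(σ)`: the number of `j ∈ {1,…,k}` such that `(j, σ(j))` is a ladder. -/
def ladderCount (k : ℕ) (σ : Equiv.Perm (Fin k)) : ℕ :=
  ((Finset.Icc 1 k).filter fun j => IsLadderAt k σ j).card

/-- The degree of a permutation: `deg(σ) := k - ℓ(σ)`. -/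
def permDegree (k : ℕ) (σ : Equiv.Perm (Fin k)) : ℕ := k - ladderCount k σ

/-!
The degree bound holds on average over the compatible permutations. If `i` shares its block of
`π(P)` with some `j ≠ i`, then `σ ↦ σ * swap i j` is an involution of the compatible permutations,
and exchanging the value at a ladder with any other value destroys the ladder. Hence at most half
of the compatible permutations have a ladder at `i`. Summing over all such `i`, the average number
of non-ladders is at least `s(π(P)) / 2`.
-/

section Averaging

open scoped Finset

variable {α ι : Type*}

lemma card_le_two_mul_card_filter_not {s : Finset α} {f : α → α} {p : α → Prop} [DecidablePred p]
    (hmaps : ∀ x ∈ s, f x ∈ s) (hinj : Set.InjOn f s) (hp : ∀ x ∈ s, p x → ¬ p (f x)) :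
    #s ≤ 2 * #{x ∈ s | ¬ p x} := by
  have hle : #{x ∈ s | p x} ≤ #{x ∈ s | ¬ p x} := by
    refine Finset.card_le_card_of_injOn f (fun x hx => ?_)
      (hinj.mono (Finset.coe_subset.2 (Finset.filter_subset p s)))
    obtain ⟨hxs, hpx⟩ := Finset.mem_filter.1 hx
    exact Finset.mem_filter.2 ⟨hmaps x hxs, hp x hxs hpx⟩
  have hsplit : #{x ∈ s | p x} + #{x ∈ s | ¬ p x} = #s := s.card_filter_add_card_filter_not p
  omega

lemma exists_card_le_mul_card_filter {C : Finset α} (hC : C.Nonempty) (S : Finset ι)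
    (r : ι → α → Prop) [∀ i x, Decidable (r i x)] {n : ℕ}
    (h : ∀ i ∈ S, #C ≤ n * #{x ∈ C | r i x}) :
    ∃ x ∈ C, #S ≤ n * #{i ∈ S | r i x} := by
  refine Finset.exists_le_of_sum_le hC ?_
  calc ∑ _x ∈ C, #S = ∑ _i ∈ S, #C := by
        simp only [Finset.sum_const, smul_eq_mul, mul_comm]
    _ ≤ ∑ i ∈ S, n * #{x ∈ C | r i x} := Finset.sum_le_sum h
    _ = ∑ x ∈ C, n * #{i ∈ S | r i x} := by
        rw [← Finset.mul_sum, ← Finset.mul_sum]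
        exact congrArg (n * ·) (Finset.sum_card_bipartiteAbove_eq_sum_card_bipartiteBelow r)

end Averaging

section Compatible

variable {α β : Type*}

/-- Compatibility of a bijection `e : α ≃ β` with a partition `P` of the disjoint union `α ⊕ β`,
the partition being encoded as an equivalence relation. For `α = β = Fin k` this is the
compatibility of a permutation with a partition of `I_k ∪ Ĩ_k`. -/
def IsCompatible (P : Setoid (α ⊕ β)) (e : α ≃ β) : Prop :=
  ∀ a, P (Sum.inl a) (Sum.inr (e a))

lemma exists_isCompatible [Finite α] [Finite β] (P : Setoid (α ⊕ β))
    (heven : ∀ x, Nat.card {a // P x (Sum.inl a)} = Nat.card {b // P x (Sum.inr b)}) :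
    ∃ e, IsCompatible P e := by
  let f : α → Quotient P := fun a => ⟦Sum.inl a⟧
  let g : β → Quotient P := fun b => ⟦Sum.inr b⟧
  have hfiber (q : Quotient P) : Nonempty ({a // f a = q} ≃ {b // g b = q}) := by
    induction q using Quotient.inductionOn with
    | _ x =>
      simpa only [f, g, Quotient.eq, P.comm' (y := x)] using Finite.card_eq.1 (heven x)
  obtain ⟨e⟩ := Classical.nonempty_pi.2 hfiber
  exact ⟨Equiv.ofFiberEquiv e, fun a => Quotient.exact (Equiv.ofFiberEquiv_map e a).symm⟩

lemma IsCompatible.swap_trans [DecidableEq α] {P : Setoid (α ⊕ β)} {e : α ≃ β}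
    (he : IsCompatible P e) {a b : α} (hab : P (Sum.inl a) (Sum.inl b)) :
    IsCompatible P ((Equiv.swap a b).trans e) := by
  intro c
  have hswap : P (Sum.inl c) (Sum.inl (Equiv.swap a b c)) := by
    rw [Equiv.swap_apply_def]
    split_ifs with hca hcb
    · exact hca ▸ hab
    · exact hcb ▸ P.symm' hab
    · exact P.refl' _
  exact P.trans' hswap (he _)

end Compatible

section Ladder

open scoped Finset

variable {k : ℕ}

lemma sigmaTilde_val_add_one (σ : Equiv.Perm (Fin k)) (i : Fin k) :
    sigmaTilde k σ (i + 1) = σ i + 1 :=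
  dif_pos ⟨by omega, i.isLt⟩

lemma sigmaTilde_eq_self (σ : Equiv.Perm (Fin k)) {n : ℕ} (hn : ¬ (1 ≤ n ∧ n ≤ k)) :
    sigmaTilde k σ n = n :=
  dif_neg hn

lemma exists_val_add_one_eq {n : ℕ} (hn : 1 ≤ n ∧ n ≤ k) : ∃ i : Fin k, (i : ℕ) + 1 = n :=
  ⟨⟨n - 1, by omega⟩, Nat.sub_add_cancel hn.1⟩

lemma sigmaTilde_one (n : ℕ) : sigmaTilde k 1 n = n := by
  by_cases hn : 1 ≤ n ∧ n ≤ k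
  · obtain ⟨i, rfl⟩ := exists_val_add_one_eq hn
    exact sigmaTilde_val_add_one 1 i
  · exact sigmaTilde_eq_self 1 hn

lemma sigmaTilde_mul (σ τ : Equiv.Perm (Fin k)) (n : ℕ) :
    sigmaTilde k (σ * τ) n = sigmaTilde k σ (sigmaTilde k τ n) := by
  by_cases hn : 1 ≤ n ∧ n ≤ k
  · obtain ⟨i, rfl⟩ := exists_val_add_one_eq hn
    simp only [sigmaTilde_val_add_one, Equiv.Perm.mul_apply]
  · simp only [sigmaTilde_eq_self _ hn]

lemma sigmaTilde_swap (a b : Fin k) (n : ℕ) :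
    sigmaTilde k (Equiv.swap a b) n = Equiv.swap ((a : ℕ) + 1) (b + 1) n := by
  by_cases hn : 1 ≤ n ∧ n ≤ k
  · obtain ⟨i, rfl⟩ := exists_val_add_one_eq hn
    have hinj : Function.Injective fun i : Fin k => (i : ℕ) + 1 :=
      (add_left_injective 1).comp Fin.val_injective
    rw [sigmaTilde_val_add_one]
    exact hinj.map_swap a b i
  · rw [sigmaTilde_eq_self _ hn, Equiv.swap_apply_of_ne_of_ne (by omega) (by omega)]

lemma sigmaTilde_injective (σ : Equiv.Perm (Fin k)) : Function.Injective (sigmaTilde k σ) := by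
  have hleft : Function.LeftInverse (sigmaTilde k σ⁻¹) (sigmaTilde k σ) := fun n => by
    rw [← sigmaTilde_mul, inv_mul_cancel, sigmaTilde_one]
  exact hleft.injective

lemma isLadderAt_val_add_one_iff (σ : Equiv.Perm (Fin k)) (a : Fin k) :
    IsLadderAt k σ (a + 1) ↔
      sigmaTilde k σ (a + 1) = min (sigmaTilde k σ a) (sigmaTilde k σ (a + 2)) + 1 := by
  have hpos := sigmaTilde_val_add_one σ a
  have hsides : sigmaTilde k σ a ≠ sigmaTilde k σ (a + 2) :=
    (sigmaTilde_injective σ).ne (by omega)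
  -- If one neighbour is one below the point, not being a valley forces the other one above it.
  simp only [IsLadderAt, IsValleyAt, Nat.add_sub_cancel, add_assoc, Nat.reduceAdd]
  omega

lemma IsLadderAt.not_mul_swap {σ : Equiv.Perm (Fin k)} {a b : Fin k} (hba : b ≠ a)
    (h : IsLadderAt k σ (a + 1)) : ¬ IsLadderAt k (σ * Equiv.swap a b) (a + 1) := by
  have hval : (b : ℕ) ≠ a := Fin.val_ne_of_ne hba
  have hne : sigmaTilde k σ (b + 1) ≠ sigmaTilde k σ (a + 1) :=
    (sigmaTilde_injective σ).ne (by omega)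
  rw [isLadderAt_val_add_one_iff] at h ⊢
  simp only [sigmaTilde_mul, sigmaTilde_swap, Equiv.swap_apply_left]
  -- If `b` is adjacent to `a`, the exchange also changes one of the two neighbouring values.
  obtain hb | hb | ⟨hbl, hbr⟩ :
      (b : ℕ) + 1 = a ∨ (b : ℕ) + 1 = a + 2 ∨ (b : ℕ) + 1 ≠ a ∧ (b : ℕ) + 1 ≠ a + 2 := by
    omega
  · have hright : Equiv.swap ((a : ℕ) + 1) a (a + 2) = a + 2 :=
      Equiv.swap_apply_of_ne_of_ne (by omega) (by omega)
    rw [hb] at hne ⊢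
    rw [Equiv.swap_apply_right, hright]
    omega
  · have hleft : Equiv.swap ((a : ℕ) + 1) (a + 2) a = a :=
      Equiv.swap_apply_of_ne_of_ne (by omega) (by omega)
    rw [hb] at hne ⊢
    rw [hleft, Equiv.swap_apply_right]
    omega
  · rw [Equiv.swap_apply_of_ne_of_ne (by omega) hbl.symm,
      Equiv.swap_apply_of_ne_of_ne (by omega) hbr.symm, ← h]
    exact hne

lemma permDegree_eq_card_filter_not_isLadderAt (σ : Equiv.Perm (Fin k)) :
    permDegree k σ = #{i : Fin k | ¬ IsLadderAt k σ (i + 1)} := by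
  let shift : Fin k ↪ ℕ := Fin.valEmbedding.trans (addRightEmbedding 1)
  have hIcc : Finset.Icc 1 k = Finset.univ.map shift := by
    ext n
    simp only [Finset.mem_Icc, Finset.mem_map, Finset.mem_univ, true_and]
    exact ⟨exists_val_add_one_eq, fun ⟨i, hi⟩ => hi ▸ ⟨Nat.le_add_left _ _, i.isLt⟩⟩
  have hcount : ladderCount k σ = #{i : Fin k | IsLadderAt k σ (i + 1)} := by
    rw [ladderCount, hIcc, Finset.filter_map, Finset.card_map]
    rfl
  have hsplit := Finset.univ.card_filter_add_card_filter_not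
    fun i : Fin k => IsLadderAt k σ (i + 1)
  rw [Finset.card_univ, Fintype.card_fin] at hsplit
  rw [permDegree, hcount]
  exact Nat.sub_eq_of_eq_add' hsplit.symm

lemma exists_card_le_two_mul_permDegree {C : Finset (Equiv.Perm (Fin k))} (hC : C.Nonempty)
    (S : Finset (Fin k)) (hS : ∀ a ∈ S, ∃ b ≠ a, ∀ σ ∈ C, σ * Equiv.swap a b ∈ C) :
    ∃ σ ∈ C, #S ≤ 2 * permDegree k σ := by
  have hhalf : ∀ a ∈ S, #C ≤ 2 * #{σ ∈ C | ¬ IsLadderAt k σ (a + 1)} := by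
    intro a ha
    obtain ⟨b, hba, hswap⟩ := hS a ha
    exact card_le_two_mul_card_filter_not hswap (mul_left_injective _).injOn
      fun σ _ hσ => hσ.not_mul_swap hba
  obtain ⟨σ, hσC, hσ⟩ := exists_card_le_mul_card_filter hC S _ hhalf
  refine ⟨σ, hσC, hσ.trans ?_⟩
  rw [permDegree_eq_card_filter_not_isLadderAt]
  gcongr
  exact S.subset_univ

end Ladder

/-- The paper's Lemma 8.2: for every even partition `P` of `I_k ∪ Ĩ_k` (two disjoint
copies of `{1,…,k}`, coded as `Fin k ⊕ Fin k`, evenness meaning that every block contains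
as many elements of the first copy as of the second), there exists a permutation `σ̂`
compatible with `P` (i.e. `i` and `σ̂(i)` always lie in the same block) such that
`deg(σ̂) ≥ s(π(P))/2`, where `s(π(P))` is the number of elements of `{1,…,k}` lying in
nontrivial blocks of the projected partition `π(P)`. -/
theorem exists_compatible_perm_of_even_partition
    (k : ℕ) (hk : 1 ≤ k) (P : Setoid (Fin k ⊕ Fin k))
    (heven : ∀ x : Fin k ⊕ Fin k,
      Nat.card {i : Fin k // P.r x (Sum.inl i)} = Nat.card {i : Fin k // P.r x (Sum.inr i)}) :
    ∃ σ : Equiv.Perm (Fin k),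
      (∀ i : Fin k, P.r (Sum.inl i) (Sum.inr (σ i))) ∧
        Nat.card {i : Fin k // ∃ j : Fin k, j ≠ i ∧ P.r (Sum.inl i) (Sum.inl j)}
          ≤ 2 * permDegree k σ := by
  classical
  let C : Finset (Equiv.Perm (Fin k)) := {σ | IsCompatible P σ}
  let S : Finset (Fin k) := {i | ∃ j ≠ i, P (Sum.inl i) (Sum.inl j)}
  have hC : C.Nonempty := Finset.filter_nonempty_iff.2 <| by
    simpa only [Finset.mem_univ, true_and] using exists_isCompatible P heven
  have hswap : ∀ i ∈ S, ∃ j ≠ i, ∀ σ ∈ C, σ * Equiv.swap i j ∈ C := by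
    intro i hi
    obtain ⟨j, hji, hij⟩ := (Finset.mem_filter_univ i).1 hi
    exact ⟨j, hji, fun σ hσ => (Finset.mem_filter_univ _).2
      (((Finset.mem_filter_univ σ).1 hσ).swap_trans hij)⟩
  obtain ⟨σ, hσC, hσ⟩ := exists_card_le_two_mul_permDegree hC S hswap
  refine ⟨σ, (Finset.mem_filter_univ σ).1 hσC, ?_⟩
  rwa [Nat.card_eq_fintype_card, Fintype.card_subtype]
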